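/- Lower-order elliptic estimate (Lemma 3.1, single-time form): suppose γ > 4/3 and r₀ < R ≤ (4/(3−α)) r₀, where α = 1/(γ−1). Then there exist constants ε₀ ∈ (0,1) and C > 0, depending only on γ, A, g₀, r₀, R, with the following property. Let w : [r₀,R] → ℝ be twice continuously differentiable and u, z : [r₀,R] → ℝ continuous, with w(r₀) = 0, 1 + w > 0 and 1 + w + yw′ > 0 on [r₀,R], sup_{[r₀,R]} (|w| + |y w′|) ≤ ε₀, and satisfying for all y ∈ (r₀,R) the relation y ρ̄ z + y ρ̄ u + (1+w)² [ ρ̄^γ (1+w)^{−2γ}(1+w+yw′)^{−γ} ]′ − (ρ̄^γ)′/(1+w)² = 0. Then ∫_{r₀}^R [ y² σ(y)^α w′(y)² + y⁴ σ(y)^{α+2} w″(y)² ] dy ≤ C ∫_{r₀}^R [ y⁴ σ(y)^α (w² + u² + z²) + y² σ(y)^{α+1} (w² + (yw′)²) ] dy. -/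

import Mathlib

open Real Set

/-!
Dividing the equation by `ρ̄ = σ ^ α` and linearising at `w = 0` shows that
`σ w'' + (α + 1) σ' w' = σ ^ (-α) (σ ^ (α + 1) w')'` equals the source terms plus a small multiple
of `w'`. Expanding its square against the weight `σ ^ α` produces the derivative of
`σ ^ (α + 1) w' ^ 2`, whose integral is a nonpositive boundary term because `σ` vanishes at `R`.
Both `w'` and `σ w''` are therefore controlled, and the small multiple of `w'` is absorbed.
-/

/-- A weight `s` on `[a, b]` that vanishes at `b` and decreases at a rate between `κ` and `M`, so
that for `0 < κ` it is comparable to the distance to `b`. It models `σ = ρ̄ ^ (γ - 1)` near a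
physical vacuum boundary; the derivative `s'` is part of the data because it is prescribed only in
the open interval and has to extend continuously to the endpoints. -/
structure IsVacuumProfile (s s' : ℝ → ℝ) (a b κ M : ℝ) : Prop where
  continuousOn : ContinuousOn s (Icc a b)
  continuousOn_deriv : ContinuousOn s' (Icc a b)
  hasDerivAt : ∀ y ∈ Ioo a b, HasDerivAt s (s' y) y
  neg_deriv_mem : ∀ y ∈ Ioo a b, -s' y ∈ Icc κ M
  eq_zero_right : s b = 0

namespace IsVacuumProfile

variable {s s' : ℝ → ℝ} {a b κ M : ℝ}

theorem strictAntiOn (hs : IsVacuumProfile s s' a b κ M) (hκ : 0 < κ) :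
    StrictAntiOn s (Icc a b) := by
  refine strictAntiOn_of_deriv_neg (convex_Icc a b) hs.continuousOn fun y hy => ?_
  rw [interior_Icc] at hy
  rw [(hs.hasDerivAt y hy).deriv]
  linarith [(hs.neg_deriv_mem y hy).1]

theorem pos (hs : IsVacuumProfile s s' a b κ M) (hκ : 0 < κ) {y : ℝ} (hy : y ∈ Ioo a b) :
    0 < s y := by
  have hlt := hs.strictAntiOn hκ (Ioo_subset_Icc_self hy) (right_mem_Icc.2 (hy.1.trans hy.2).le)
    hy.2
  rwa [hs.eq_zero_right] at hlt

theorem nonneg_left (hs : IsVacuumProfile s s' a b κ M) (hκ : 0 < κ) (hab : a ≤ b) : 0 ≤ s a := by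
  rw [← hs.eq_zero_right]
  exact (hs.strictAntiOn hκ).antitoneOn (left_mem_Icc.2 hab) (right_mem_Icc.2 hab) hab

theorem continuousOn_rpow (hs : IsVacuumProfile s s' a b κ M) {p : ℝ} (hp : 0 ≤ p) :
    ContinuousOn (fun y => s y ^ p) (Icc a b) :=
  hs.continuousOn.rpow_const fun _ _ => Or.inr hp

end IsVacuumProfile

section Hardy

variable {s s' v v' : ℝ → ℝ} {a b κ M α : ℝ}

/-- The integrand is the derivative of `s ^ (α + 1) * v ^ 2`; since `s` vanishes at `b`, only the
boundary term at `a` survives, and it is nonpositive. -/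
theorem integral_rpow_mul_cross_term_nonpos (hs : IsVacuumProfile s s' a b κ M) (hκ : 0 < κ)
    (hab : a ≤ b) (hα : 0 ≤ α) (hv : ContinuousOn v (Icc a b)) (hv' : ContinuousOn v' (Icc a b))
    (hderiv : ∀ y ∈ Ioo a b, HasDerivAt v (v' y) y) :
    ∫ y in a..b, s y ^ α * (2 * v y * (s y * v' y) + (α + 1) * s' y * v y ^ 2) ≤ 0 := by
  have hsc := hs.continuousOn
  have hs'c := hs.continuousOn_deriv
  have := hs.continuousOn_rpow hα
  have hpow' := hs.continuousOn_rpow (p := α + 1) (by linarith)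
  have hint : IntervalIntegrable
      (fun y => s y ^ α * (2 * v y * (s y * v' y) + (α + 1) * s' y * v y ^ 2))
      MeasureTheory.volume a b :=
    ContinuousOn.intervalIntegrable_of_Icc hab (by fun_prop)
  have hprod : ∀ y ∈ Ioo a b, HasDerivAt (fun y => s y ^ (α + 1) * v y ^ 2)
      (s y ^ α * (2 * v y * (s y * v' y) + (α + 1) * s' y * v y ^ 2)) y := by
    intro y hy
    have hsrpow := (hs.hasDerivAt y hy).rpow_const (p := α + 1) (Or.inr (by linarith))
    refine (hsrpow.mul ((hderiv y hy).pow 2)).congr_deriv ?_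
    simp only [add_sub_cancel_right, rpow_add_one (hs.pos hκ hy).ne', Pi.pow_apply]
    push_cast
    ring
  rw [intervalIntegral.integral_eq_sub_of_hasDerivAt_of_le hab (by fun_prop) hprod hint,
    hs.eq_zero_right, zero_rpow (by linarith), zero_mul, zero_sub, Left.neg_nonpos_iff]
  have := hs.nonneg_left hκ hab
  positivity

theorem exists_sq_add_sq_le_cross_term_add_sq_sub (hκ : 0 < κ) (M : ℝ) :
    ∃ C₁ > 0, ∃ C₂ > 0, ∀ m ∈ Icc κ M, ∀ x X : ℝ,
      x ^ 2 + X ^ 2 ≤ C₁ * (2 * x * X - m * x ^ 2) + C₂ * (X - m * x) ^ 2 := by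
  refine ⟨(1 + 2 * M ^ 2) * (2 / κ), by positivity, (1 + 2 * M ^ 2) * (4 / κ ^ 2) + 2,
    by positivity, fun m ⟨hκm, hmM⟩ x X => ?_⟩
  set f := X - m * x with hf
  have hX : X = f + m * x := by rw [hf]; ring
  have hm : 0 < m := hκ.trans_le hκm
  have hx : x ^ 2 ≤ 2 / κ * (2 * x * X - m * x ^ 2) + 4 / κ ^ 2 * f ^ 2 := by
    have hyoung : κ ^ 2 * x ^ 2 ≤ 2 * κ * (2 * x * X - m * x ^ 2) + 4 * f ^ 2 := by
      have : κ * κ * x ^ 2 ≤ κ * m * x ^ 2 := by gcongr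
      rw [hX]
      nlinarith [sq_nonneg (κ * x + 2 * f)]
    calc x ^ 2 = κ ^ 2 * x ^ 2 / κ ^ 2 := by field_simp
      _ ≤ (2 * κ * (2 * x * X - m * x ^ 2) + 4 * f ^ 2) / κ ^ 2 := by gcongr
      _ = _ := by field_simp
  have hX_sq : X ^ 2 ≤ 2 * f ^ 2 + 2 * M ^ 2 * x ^ 2 := by
    have : m ^ 2 * x ^ 2 ≤ M ^ 2 * x ^ 2 := by gcongr
    rw [hX]
    nlinarith [sq_nonneg (f - m * x)]
  calc x ^ 2 + X ^ 2 ≤ (1 + 2 * M ^ 2) * x ^ 2 + 2 * f ^ 2 := by linarith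
    _ ≤ (1 + 2 * M ^ 2) * (2 / κ * (2 * x * X - m * x ^ 2) + 4 / κ ^ 2 * f ^ 2) + 2 * f ^ 2 := by
      gcongr
    _ = _ := by ring

/-- A Hardy-type inequality: `s v' + (α + 1) s' v` is `s ^ (-α)` times the derivative of
`s ^ (α + 1) * v`. -/
theorem exists_integral_sq_add_sq_le_integral_sq_weighted_deriv (hab : a ≤ b) (hκ : 0 < κ)
    (hα : 0 ≤ α) (M : ℝ) :
    ∃ C > 0, ∀ s s' v v' : ℝ → ℝ, IsVacuumProfile s s' a b κ M →
      ContinuousOn v (Icc a b) → ContinuousOn v' (Icc a b) →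
      (∀ y ∈ Ioo a b, HasDerivAt v (v' y) y) →
      ∫ y in a..b, s y ^ α * (v y ^ 2 + (s y * v' y) ^ 2) ≤
        C * ∫ y in a..b, s y ^ α * (s y * v' y + (α + 1) * s' y * v y) ^ 2 := by
  obtain ⟨C₁, hC₁, C₂, hC₂, hpt⟩ := exists_sq_add_sq_le_cross_term_add_sq_sub
    (κ := (α + 1) * κ) (by positivity) ((α + 1) * M)
  refine ⟨C₂, hC₂, fun s s' v v' hs hv hv' hderiv => ?_⟩
  have hsc := hs.continuousOn
  have hs'c := hs.continuousOn_deriv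
  have := hs.continuousOn_rpow hα
  have hcross := integral_rpow_mul_cross_term_nonpos hs hκ hab hα hv hv' hderiv
  have hcross_int : IntervalIntegrable
      (fun y => s y ^ α * (2 * v y * (s y * v' y) + (α + 1) * s' y * v y ^ 2))
      MeasureTheory.volume a b :=
    ContinuousOn.intervalIntegrable_of_Icc hab (by fun_prop)
  have hres_int : IntervalIntegrable
      (fun y => s y ^ α * (s y * v' y + (α + 1) * s' y * v y) ^ 2) MeasureTheory.volume a b :=
    ContinuousOn.intervalIntegrable_of_Icc hab (by fun_prop)
  have hmono := intervalIntegral.integral_mono_on_of_le_Ioo hab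
    (ContinuousOn.intervalIntegrable_of_Icc hab (by fun_prop))
    ((hcross_int.const_mul C₁).add (hres_int.const_mul C₂))
    (f := fun y => s y ^ α * (v y ^ 2 + (s y * v' y) ^ 2)) (fun y hy => by
      obtain ⟨hκy, hMy⟩ := hs.neg_deriv_mem y hy
      have hbound := hpt ((α + 1) * -s' y) ⟨by gcongr, by gcongr⟩ (v y) (s y * v' y)
      have hscaled := mul_le_mul_of_nonneg_left hbound (rpow_nonneg (hs.pos hκ hy).le α)
      refine hscaled.trans_eq ?_
      ring)
  rw [intervalIntegral.integral_add (hcross_int.const_mul _) (hres_int.const_mul _),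
    intervalIntegral.integral_const_mul, intervalIntegral.integral_const_mul] at hmono
  linarith [mul_nonpos_of_nonneg_of_nonpos hC₁.le hcross]

theorem exists_integral_sq_add_sq_le_of_sq_weighted_deriv_le (hab : a ≤ b) (hκ : 0 < κ)
    (hα : 0 ≤ α) (M : ℝ) :
    ∃ C > 0, ∃ δ > 0, ∀ s s' v v' h : ℝ → ℝ, IsVacuumProfile s s' a b κ M →
      ContinuousOn v (Icc a b) → ContinuousOn v' (Icc a b) → ContinuousOn h (Icc a b) →
      (∀ y ∈ Ioo a b, HasDerivAt v (v' y) y) →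
      (∀ y ∈ Ioo a b, (s y * v' y + (α + 1) * s' y * v y) ^ 2 ≤ h y + δ * v y ^ 2) →
      ∫ y in a..b, s y ^ α * (v y ^ 2 + (s y * v' y) ^ 2) ≤ C * ∫ y in a..b, s y ^ α * h y := by
  obtain ⟨C, hC, hhardy⟩ :=
    exists_integral_sq_add_sq_le_integral_sq_weighted_deriv hab hκ hα M
  refine ⟨2 * C, by positivity, 1 / (2 * C), by positivity,
    fun s s' v v' h hs hv hv' hh hderiv hres => ?_⟩
  have hsc := hs.continuousOn
  have hs'c := hs.continuousOn_deriv
  have := hs.continuousOn_rpow hα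
  have hh_int : IntervalIntegrable (fun y => s y ^ α * h y) MeasureTheory.volume a b :=
    ContinuousOn.intervalIntegrable_of_Icc hab (by fun_prop)
  have henergy_int : IntervalIntegrable (fun y => s y ^ α * (v y ^ 2 + (s y * v' y) ^ 2))
      MeasureTheory.volume a b :=
    ContinuousOn.intervalIntegrable_of_Icc hab (by fun_prop)
  have hmono := intervalIntegral.integral_mono_on_of_le_Ioo hab
    (ContinuousOn.intervalIntegrable_of_Icc hab (by fun_prop))
    (hh_int.add (henergy_int.const_mul (1 / (2 * C))))
    (f := fun y => s y ^ α * (s y * v' y + (α + 1) * s' y * v y) ^ 2) (fun y hy => by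
      have hpos := rpow_nonneg (hs.pos hκ hy).le α
      calc s y ^ α * (s y * v' y + (α + 1) * s' y * v y) ^ 2
          ≤ s y ^ α * (h y + 1 / (2 * C) * (v y ^ 2 + (s y * v' y) ^ 2)) := by
            gcongr
            refine (hres y hy).trans ?_
            gcongr
            exact le_add_of_nonneg_right (sq_nonneg _)
        _ = _ := by ring)
  rw [intervalIntegral.integral_add hh_int (henergy_int.const_mul _),
    intervalIntegral.integral_const_mul] at hmono
  have habsorb := (hhardy s s' v v' hs hv hv' hderiv).trans
    (mul_le_mul_of_nonneg_left hmono hC.le)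
  rw [mul_add, ← mul_assoc, show C * (1 / (2 * C)) = 1 / 2 by field_simp] at habsorb
  linarith

end Hardy

section Coefficients

variable {γ : ℝ}

/-- The pressure of the deformed star relative to equilibrium, times the area factor `(1 + p) ^ 2`,
where `p = w` and `q = y w'` are the relative displacement and its scaled derivative. -/
noncomputable def stressFactor (γ p q : ℝ) : ℝ :=
  (1 + p) ^ 2 * ((1 + p) ^ (-(2 * γ)) * (1 + p + q) ^ (-γ))

/-- Pressure force minus gravity, relative to their common value at equilibrium. -/
noncomputable def forceImbalance (γ p q : ℝ) : ℝ :=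
  stressFactor γ p q - 1 / (1 + p) ^ 2

/-- The coefficient of `w''` in the expanded equation, normalised to `1` at equilibrium. -/
noncomputable def principalCoeff (γ p q : ℝ) : ℝ :=
  stressFactor γ p q / (1 + p + q)

/-- The coefficient of the `w'` term that carries the factor `σ`; it equals `4` at equilibrium. -/
noncomputable def driftCoeff (γ p q : ℝ) : ℝ :=
  stressFactor γ p q * (2 / (1 + p) + 2 / (1 + p + q))

theorem hasFDerivAt_stressFactor_zero :
    HasFDerivAt (fun x : ℝ × ℝ => stressFactor γ x.1 x.2)
      ((2 - 3 * γ) • ContinuousLinearMap.fst ℝ ℝ ℝ - γ • ContinuousLinearMap.snd ℝ ℝ ℝ) 0 := by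
  have hp : HasFDerivAt (fun x : ℝ × ℝ => 1 + x.1) (ContinuousLinearMap.fst ℝ ℝ ℝ) 0 :=
    hasFDerivAt_fst.const_add 1
  have hpq : HasFDerivAt (fun x : ℝ × ℝ => 1 + x.1 + x.2)
      (ContinuousLinearMap.fst ℝ ℝ ℝ + ContinuousLinearMap.snd ℝ ℝ ℝ) 0 :=
    hp.add hasFDerivAt_snd
  have hrpow := (hp.rpow_const (p := -(2 * γ)) (Or.inl (by simp))).mul
    (hpq.rpow_const (p := -γ) (Or.inl (by simp)))
  refine ((hp.pow 2).mul hrpow).congr_fderiv ?_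
  ext
  · simp
    ring
  · simp

theorem hasFDerivAt_forceImbalance_zero :
    HasFDerivAt (fun x : ℝ × ℝ => forceImbalance γ x.1 x.2)
      ((4 - 3 * γ) • ContinuousLinearMap.fst ℝ ℝ ℝ - γ • ContinuousLinearMap.snd ℝ ℝ ℝ) 0 := by
  have hgravity : HasFDerivAt (fun x : ℝ × ℝ => 1 / (1 + x.1) ^ 2)
      (-(2 : ℝ) • ContinuousLinearMap.fst ℝ ℝ ℝ) 0 := by
    have hp : HasFDerivAt (fun x : ℝ × ℝ => 1 + x.1) (ContinuousLinearMap.fst ℝ ℝ ℝ) 0 :=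
      hasFDerivAt_fst.const_add 1
    have hinv := (hasDerivAt_inv (one_ne_zero (α := ℝ))).comp_hasFDerivAt_of_eq 0 (hp.pow 2)
      (by simp)
    simp only [one_div]
    refine hinv.congr_fderiv ?_
    ext <;> simp
  refine (hasFDerivAt_stressFactor_zero.sub hgravity).congr_fderiv ?_
  ext
  · simp
    ring
  · simp

theorem continuousAt_principalCoeff_zero :
    ContinuousAt (fun x : ℝ × ℝ => principalCoeff γ x.1 x.2) 0 :=
  hasFDerivAt_stressFactor_zero.continuousAt.div (by fun_prop) (by simp)

theorem continuousAt_driftCoeff_zero :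
    ContinuousAt (fun x : ℝ × ℝ => driftCoeff γ x.1 x.2) 0 :=
  hasFDerivAt_stressFactor_zero.continuousAt.mul
    ((continuousAt_const.div (by fun_prop) (by simp)).add
      (continuousAt_const.div (by fun_prop) (by simp)))

theorem eventually_abs_forceImbalance_sub_linear_le {η : ℝ} (hη : 0 < η) :
    ∀ᶠ x : ℝ × ℝ in nhds 0,
      |forceImbalance γ x.1 x.2 + (3 * γ - 4) * x.1 + γ * x.2| ≤ η * (|x.1| + |x.2|) := by
  filter_upwards [hasFDerivAt_forceImbalance_zero.isLittleO.def hη] with x hx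
  have hnorm : ‖x‖ ≤ |x.1| + |x.2| :=
    max_le (le_add_of_nonneg_right (abs_nonneg _)) (le_add_of_nonneg_left (abs_nonneg _))
  calc |forceImbalance γ x.1 x.2 + (3 * γ - 4) * x.1 + γ * x.2|
      = ‖forceImbalance γ x.1 x.2 - forceImbalance γ (0 : ℝ × ℝ).1 (0 : ℝ × ℝ).2 -
          ((4 - 3 * γ) • ContinuousLinearMap.fst ℝ ℝ ℝ - γ • ContinuousLinearMap.snd ℝ ℝ ℝ)
            (x - 0)‖ := by
        rw [Real.norm_eq_abs]
        congr 1
        simp [forceImbalance, stressFactor]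
        ring
    _ ≤ η * ‖x - 0‖ := hx
    _ ≤ η * (|x.1| + |x.2|) := by rw [sub_zero]; gcongr

theorem eventually_abs_principalCoeff_sub_one_lt {η : ℝ} (hη : 0 < η) :
    ∀ᶠ x : ℝ × ℝ in nhds 0, |principalCoeff γ x.1 x.2 - 1| < η := by
  simpa [principalCoeff, stressFactor, Real.dist_eq] using
    Metric.continuousAt_iff'.1 (continuousAt_principalCoeff_zero (γ := γ)) η hη

theorem eventually_abs_driftCoeff_sub_four_lt {η : ℝ} (hη : 0 < η) :
    ∀ᶠ x : ℝ × ℝ in nhds 0, |driftCoeff γ x.1 x.2 - 4| < η := by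
  have hvalue : driftCoeff γ (0 : ℝ × ℝ).1 (0 : ℝ × ℝ).2 = 4 := by
    norm_num [driftCoeff, stressFactor]
  simpa only [hvalue, Real.dist_eq] using
    Metric.continuousAt_iff'.1 (continuousAt_driftCoeff_zero (γ := γ)) η hη

theorem exists_coeff_bounds_of_small (γ : ℝ) {η : ℝ} (hη : 0 < η) :
    ∃ ε ∈ Ioo (0 : ℝ) 1, ∀ p q : ℝ, |p| + |q| ≤ ε →
      |forceImbalance γ p q + (3 * γ - 4) * p + γ * q| ≤ η * (|p| + |q|) ∧
      |principalCoeff γ p q - 1| ≤ η ∧ |driftCoeff γ p q - 4| ≤ η := by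
  obtain ⟨δ, hδ, hball⟩ := Metric.eventually_nhds_iff.1
    ((eventually_abs_forceImbalance_sub_linear_le (γ := γ) hη).and
      ((eventually_abs_principalCoeff_sub_one_lt (γ := γ) hη).and
        (eventually_abs_driftCoeff_sub_four_lt (γ := γ) hη)))
  refine ⟨min (1 / 2) (δ / 2), ⟨by positivity, (min_le_left _ _).trans_lt (by norm_num)⟩,
    fun p q hpq => ?_⟩
  have hdist : dist (p, q) (0 : ℝ × ℝ) < δ := by
    have hnorm : ‖(p, q)‖ ≤ |p| + |q| :=
      max_le (le_add_of_nonneg_right (abs_nonneg _)) (le_add_of_nonneg_left (abs_nonneg _))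
    rw [dist_zero_right]
    linarith [min_le_right (1 / 2) (δ / 2)]
  obtain ⟨himbalance, hprincipal, hdrift⟩ := hball hdist
  exact ⟨himbalance, hprincipal.le, hdrift.le⟩

end Coefficients

section Residual

variable {γ c η y m s p x X F G A B : ℝ}

theorem mul_abs_residual_le (hγ : 0 < γ) (hη : η ≤ 1 / 2) (hy : 0 < y) (hm : 0 ≤ m)
    (hG : |G + c * p + γ * (y * x)| ≤ η * (|p| + |y * x|)) (hA : |A - 1| ≤ η) (hB : |B - 4| ≤ η)
    (heq : y * F - m * G - γ * (s * B * x + A * (y * X)) = 0) :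
    γ * y / 2 * |X - m * x| ≤
      y * |F| + m * (|c| + 1) * |p| + 5 * γ * |s * x| + m * (1 + γ) * (y * |η * x|) := by
  have hη0 : 0 ≤ η := (abs_nonneg _).trans hA
  have hA_half : 1 / 2 ≤ A := by linarith [(abs_le.1 hA).1]
  have hB_abs : |B| ≤ 5 := abs_le.2 ⟨by linarith [(abs_le.1 hB).1], by linarith [(abs_le.1 hB).2]⟩
  have hsolve : γ * y * A * (X - m * x) =
      y * F + -(m * (G + c * p + γ * (y * x))) + m * (c * p) + -(γ * (B * (s * x)))
        + -(γ * m * ((A - 1) * (y * x))) := by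
    linear_combination -heq
  have htriangle : γ * y * A * |X - m * x| ≤
      y * |F| + m * |G + c * p + γ * (y * x)| + m * (|c| * |p|) + γ * (|B| * |s * x|)
        + γ * m * (|A - 1| * |y * x|) := by
    have hcoeff : 0 ≤ γ * y * A := by positivity
    calc γ * y * A * |X - m * x| = |γ * y * A * (X - m * x)| := by
          rw [abs_mul, abs_of_nonneg hcoeff]
      _ ≤ |y * F| + |-(m * (G + c * p + γ * (y * x)))| + |m * (c * p)| + |-(γ * (B * (s * x)))|
          + |-(γ * m * ((A - 1) * (y * x)))| := by
          rw [hsolve]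
          exact (abs_add_le _ _).trans
            (by gcongr; exact (abs_add_le _ _).trans (by gcongr; exact abs_add_three _ _ _))
      _ = _ := by
          simp only [abs_neg, abs_mul, abs_of_pos hy, abs_of_pos hγ, abs_of_nonneg hm]
  calc γ * y / 2 * |X - m * x| = γ * y * (1 / 2) * |X - m * x| := by ring
    _ ≤ γ * y * A * |X - m * x| := by gcongr
    _ ≤ y * |F| + m * (η * (|p| + |y * x|)) + m * (|c| * |p|) + γ * (5 * |s * x|)
        + γ * m * (η * |y * x|) := htriangle.trans (by gcongr)
    _ = y * |F| + m * (|c| + η) * |p| + 5 * γ * |s * x| + m * (1 + γ) * (y * |η * x|) := by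
        rw [abs_mul y, abs_mul η, abs_of_pos hy, abs_of_nonneg hη0]
        ring
    _ ≤ _ := by gcongr; linarith

theorem sq_add_four_mul_le (k₁ k₂ k₃ k₄ x₁ x₂ x₃ x₄ : ℝ) :
    (k₁ * x₁ + k₂ * x₂ + k₃ * x₃ + k₄ * x₄) ^ 2 ≤
      (k₁ ^ 2 + k₂ ^ 2 + k₃ ^ 2 + k₄ ^ 2) * (x₁ ^ 2 + x₂ ^ 2 + x₃ ^ 2 + x₄ ^ 2) := by
  simpa [Fin.sum_univ_four] using
    Finset.sum_mul_sq_le_sq_mul_sq Finset.univ ![k₁, k₂, k₃, k₄] ![x₁, x₂, x₃, x₄]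

theorem exists_sq_residual_le {a : ℝ} (hγ : 0 < γ) (ha : 0 < a) (c M : ℝ) :
    ∃ L > 0, ∀ y m s p x X F G A B η : ℝ, η ≤ 1 / 2 → a ≤ y → m ∈ Icc 0 M →
      |G + c * p + γ * (y * x)| ≤ η * (|p| + |y * x|) → |A - 1| ≤ η → |B - 4| ≤ η →
      y * F - m * G - γ * (s * B * x + A * (y * X)) = 0 →
      (X - m * x) ^ 2 ≤ L * (F ^ 2 + p ^ 2 + (s * x) ^ 2 + (η * x) ^ 2) := by
  refine ⟨(2 / γ) ^ 2 + (2 * M * (|c| + 1) / (γ * a)) ^ 2 + (10 / a) ^ 2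
    + (2 * M * (1 + γ) / γ) ^ 2, by positivity, ?_⟩
  intro y m s p x X F G A B η hη hay ⟨hm, hmM⟩ hG hA hB heq
  have hy : 0 < y := ha.trans_le hay
  have hM : 0 ≤ M := hm.trans hmM
  have hresidual : |X - m * x| ≤ 2 / γ * |F| + 2 * M * (|c| + 1) / (γ * a) * |p|
      + 10 / a * |s * x| + 2 * M * (1 + γ) / γ * |η * x| := by
    calc |X - m * x| = 2 / (γ * y) * (γ * y / 2 * |X - m * x|) := by field_simp
      _ ≤ 2 / (γ * y) * (y * |F| + m * (|c| + 1) * |p| + 5 * γ * |s * x|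
          + m * (1 + γ) * (y * |η * x|)) := by
          gcongr
          exact mul_abs_residual_le hγ hη hy hm hG hA hB heq
      _ = 2 / γ * |F| + 2 * m * (|c| + 1) / (γ * y) * |p| + 10 / y * |s * x|
          + 2 * m * (1 + γ) / γ * |η * x| := by field_simp; ring
      _ ≤ _ := by gcongr
  have hsq := pow_le_pow_left₀ (abs_nonneg _) hresidual 2
  simpa only [sq_abs] using hsq.trans (sq_add_four_mul_le _ _ _ _ _ _ _ _)

end Residual

section Equation

variable {s w v : ℝ → ℝ} {α γ y s' v' : ℝ}

theorem hasDerivAt_deformed_pressure (hs : 0 < s y) (hw : 0 < 1 + w y)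
    (hwv : 0 < 1 + w y + y * v y) (hsd : HasDerivAt s s' y) (hwd : HasDerivAt w (v y) y)
    (hvd : HasDerivAt v v' y) :
    HasDerivAt
      (fun x => s x ^ (α + 1) * (1 + w x) ^ (-(2 * γ)) * (1 + w x + x * v x) ^ (-γ))
      (s y ^ α * ((1 + w y) ^ (-(2 * γ)) * (1 + w y + y * v y) ^ (-γ)) *
        ((α + 1) * s' - γ * s y *
          (2 * v y / (1 + w y) + (2 * v y + y * v') / (1 + w y + y * v y)))) y := by
  have hsrpow := hsd.rpow_const (p := α + 1) (Or.inl hs.ne')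
  have hradial := (hwd.const_add 1).rpow_const (p := -(2 * γ)) (Or.inl hw.ne')
  have hjacobian := ((hwd.const_add 1).add ((hasDerivAt_id y).mul hvd)).rpow_const (p := -γ)
    (Or.inl hwv.ne')
  refine ((hsrpow.mul hradial).mul hjacobian).congr_deriv ?_
  simp only [Pi.mul_apply, Pi.add_apply, id, add_sub_cancel_right, rpow_add_one hs.ne',
    rpow_sub_one hw.ne', rpow_sub_one hwv.ne']
  field_simp
  ring

/-- The momentum equation divided by `ρ̄ = s ^ α`, with the pressure derivative expanded. -/
theorem expanded_equation_of_momentum_equation {F : ℝ} (hα : 0 ≤ α) (hs : 0 < s y)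
    (hw : 0 < 1 + w y) (hwv : 0 < 1 + w y + y * v y) (hsd : HasDerivAt s s' y)
    (hwd : HasDerivAt w (v y) y) (hvd : HasDerivAt v v' y)
    (heq : y * s y ^ α * F
      + (1 + w y) ^ 2 * deriv (fun x => s x ^ (α + 1) * (1 + w x) ^ (-(2 * γ)) *
          (1 + w x + x * v x) ^ (-γ)) y
      - deriv (fun x => s x ^ (α + 1)) y / (1 + w y) ^ 2 = 0) :
    y * F + (α + 1) * s' * forceImbalance γ (w y) (y * v y)
      - γ * (s y * driftCoeff γ (w y) (y * v y) * v y
        + principalCoeff γ (w y) (y * v y) * (y * (s y * v'))) = 0 := by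
  rw [(hasDerivAt_deformed_pressure hs hw hwv hsd hwd hvd).deriv,
    (hsd.rpow_const (Or.inr (by linarith))).deriv, add_sub_cancel_right] at heq
  apply mul_left_cancel₀ (rpow_pos_of_pos hs α).ne'
  rw [mul_zero, ← heq]
  unfold forceImbalance driftCoeff principalCoeff stressFactor
  field_simp
  ring

end Equation

theorem exists_energy_le_of_expanded_equation {α γ a b κ : ℝ} (hα : 0 ≤ α) (hγ : 0 < γ)
    (ha : 0 < a) (hab : a ≤ b) (hκ : 0 < κ) (M : ℝ) :
    ∃ ε ∈ Ioo (0 : ℝ) 1, ∃ C > 0, ∀ s s' w v v' F : ℝ → ℝ, IsVacuumProfile s s' a b κ M →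
      ContinuousOn w (Icc a b) → ContinuousOn v (Icc a b) → ContinuousOn v' (Icc a b) →
      ContinuousOn F (Icc a b) → (∀ y ∈ Ioo a b, HasDerivAt v (v' y) y) →
      (∀ y ∈ Ioo a b, |w y| + |y * v y| ≤ ε) →
      (∀ y ∈ Ioo a b, y * F y + (α + 1) * s' y * forceImbalance γ (w y) (y * v y)
        - γ * (s y * driftCoeff γ (w y) (y * v y) * v y
          + principalCoeff γ (w y) (y * v y) * (y * (s y * v' y))) = 0) →
      ∫ y in a..b, s y ^ α * (v y ^ 2 + (s y * v' y) ^ 2) ≤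
        C * ∫ y in a..b, s y ^ α * (F y ^ 2 + w y ^ 2 + (s y * v y) ^ 2) := by
  obtain ⟨C, hC, δ, hδ, henergy⟩ :=
    exists_integral_sq_add_sq_le_of_sq_weighted_deriv_le hab hκ hα M
  obtain ⟨L, hL, hresidual⟩ := exists_sq_residual_le hγ ha (3 * γ - 4) ((α + 1) * M)
  obtain ⟨η, hη, hη_half, hη_absorb⟩ : ∃ η > 0, η ≤ 1 / 2 ∧ L * η ^ 2 ≤ δ := by
    refine ⟨min (1 / 2) √(δ / L), by positivity, min_le_left _ _, ?_⟩
    calc L * min (1 / 2) √(δ / L) ^ 2 ≤ L * √(δ / L) ^ 2 := by gcongr; exact min_le_right _ _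
      _ = δ := by rw [sq_sqrt (by positivity)]; field_simp
  obtain ⟨ε, hε, hcoeff⟩ := exists_coeff_bounds_of_small γ hη
  refine ⟨ε, hε, C * L, by positivity, ?_⟩
  intro s s' w v v' F hs hw hv hv' hF hderiv hsmall heq
  have hsc := hs.continuousOn
  have hbound := henergy s s' v v' (fun y => L * (F y ^ 2 + w y ^ 2 + (s y * v y) ^ 2)) hs hv hv'
    (by fun_prop) hderiv (fun y hy => by
      obtain ⟨himbalance, hprincipal, hdrift⟩ := hcoeff _ _ (hsmall y hy)
      obtain ⟨hκy, hMy⟩ := hs.neg_deriv_mem y hy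
      have hm : (α + 1) * -s' y ∈ Icc 0 ((α + 1) * M) :=
        ⟨mul_nonneg (by linarith) (hκ.le.trans hκy), by gcongr⟩
      have hsq := hresidual y ((α + 1) * -s' y) (s y) (w y) (v y) (s y * v' y) (F y) _ _ _ η
        hη_half hy.1.le hm himbalance hprincipal hdrift
        (by linear_combination heq y hy)
      calc (s y * v' y + (α + 1) * s' y * v y) ^ 2
          = (s y * v' y - (α + 1) * -s' y * v y) ^ 2 := by ring
        _ ≤ L * (F y ^ 2 + w y ^ 2 + (s y * v y) ^ 2 + (η * v y) ^ 2) := hsq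
        _ = L * (F y ^ 2 + w y ^ 2 + (s y * v y) ^ 2) + L * η ^ 2 * v y ^ 2 := by ring
        _ ≤ _ := by gcongr)
  simp only [mul_left_comm _ L] at hbound
  rwa [intervalIntegral.integral_const_mul, ← mul_assoc] at hbound

section Enthalpy

variable {K a b : ℝ}

/-- The paper's `σ`, with `K` in place of `Ā ^ (γ - 1)`; it is proportional to the specific enthalpy
of the equilibrium star. -/
noncomputable def enthalpy (K R y : ℝ) : ℝ := K * (1 / y - 1 / R)

theorem hasDerivAt_enthalpy (K b : ℝ) {y : ℝ} (hy : y ≠ 0) :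
    HasDerivAt (enthalpy K b) (-(K / y ^ 2)) y := by
  have hinv := ((hasDerivAt_inv hy).sub_const (1 / b)).const_mul K
  simp only [← one_div] at hinv
  exact hinv.congr_deriv (by ring)

theorem isVacuumProfile_enthalpy (hK : 0 ≤ K) (ha : 0 < a) :
    IsVacuumProfile (enthalpy K b) (fun y => -(K / y ^ 2)) a b (K / b ^ 2) (K / a ^ 2) where
  continuousOn y hy :=
    (hasDerivAt_enthalpy K b (ha.trans_le hy.1).ne').continuousAt.continuousWithinAt
  continuousOn_deriv :=
    (continuousOn_const.div (by fun_prop) fun _ hy => pow_ne_zero 2 (ha.trans_le hy.1).ne').neg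
  hasDerivAt y hy := hasDerivAt_enthalpy K b (ha.trans hy.1).ne'
  neg_deriv_mem y hy := by
    have hy₀ : 0 < y := ha.trans hy.1
    rw [neg_neg]
    exact ⟨by gcongr; exact hy.2.le, by gcongr; exact hy.1.le⟩
  eq_zero_right := by simp [enthalpy]

theorem mul_rpow_eq_enthalpy_rpow {B γ y R : ℝ} (hB : 0 ≤ B) (hγ : 1 < γ) (hy : 0 < y)
    (hyR : y ≤ R) :
    B * (1 / y - 1 / R) ^ (1 / (γ - 1)) = enthalpy (B ^ (γ - 1)) R y ^ (1 / (γ - 1)) := by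
  have hdrop : 0 ≤ 1 / y - 1 / R := sub_nonneg.2 (one_div_le_one_div_of_le hy hyR)
  rw [enthalpy, mul_rpow (rpow_nonneg hB _) hdrop, one_div (γ - 1),
    rpow_rpow_inv hB (sub_pos.2 hγ).ne']

end Enthalpy

section WeightedEnergies

variable {s s' w u z v v' : ℝ → ℝ} {a b κ M α : ℝ}

theorem integral_spatial_energy_le (hs : IsVacuumProfile s s' a b κ M) (hκ : 0 < κ) (ha : 0 ≤ a)
    (hab : a ≤ b) (hα : 0 ≤ α) (hv : ContinuousOn v (Icc a b)) (hv' : ContinuousOn v' (Icc a b)) :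
    ∫ y in a..b, (y ^ 2 * s y ^ α * v y ^ 2 + y ^ 4 * s y ^ (α + 2) * v' y ^ 2) ≤
      (b ^ 2 + b ^ 4) * ∫ y in a..b, s y ^ α * (v y ^ 2 + (s y * v' y) ^ 2) := by
  have hsc := hs.continuousOn
  have := hs.continuousOn_rpow hα
  have hpow₂ := hs.continuousOn_rpow (p := α + 2) (by linarith)
  rw [← intervalIntegral.integral_const_mul]
  refine intervalIntegral.integral_mono_on_of_le_Ioo hab
    (ContinuousOn.intervalIntegrable_of_Icc hab (by fun_prop))
    (ContinuousOn.intervalIntegrable_of_Icc hab (by fun_prop)) fun y hy => ?_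
  have hspos := hs.pos hκ hy
  have hy₀ : 0 < y := ha.trans_lt hy.1
  have hyb : y ≤ b := hy.2.le
  calc y ^ 2 * s y ^ α * v y ^ 2 + y ^ 4 * s y ^ (α + 2) * v' y ^ 2
      = s y ^ α * (y ^ 2 * v y ^ 2 + y ^ 4 * (s y * v' y) ^ 2) := by
        rw [rpow_add hspos, rpow_two]
        ring
    _ ≤ s y ^ α * ((b ^ 2 + b ^ 4) * v y ^ 2 + (b ^ 2 + b ^ 4) * (s y * v' y) ^ 2) := by
        have hsq : y ^ 2 ≤ b ^ 2 + b ^ 4 := (pow_le_pow_left₀ hy₀.le hyb 2).trans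
          (le_add_of_nonneg_right (by positivity))
        have hpow₄ : y ^ 4 ≤ b ^ 2 + b ^ 4 := (pow_le_pow_left₀ hy₀.le hyb 4).trans
          (le_add_of_nonneg_left (by positivity))
        gcongr
    _ = _ := by ring

theorem integral_source_le (hs : IsVacuumProfile s s' a b κ M) (hκ : 0 < κ) (ha : 0 < a)
    (hab : a ≤ b) (hα : 0 ≤ α) (hw : ContinuousOn w (Icc a b)) (hu : ContinuousOn u (Icc a b))
    (hz : ContinuousOn z (Icc a b)) (hv : ContinuousOn v (Icc a b)) :
    ∫ y in a..b, s y ^ α * ((z y + u y) ^ 2 + w y ^ 2 + (s y * v y) ^ 2) ≤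
      (2 + s a) / a ^ 4 * ∫ y in a..b, (y ^ 4 * s y ^ α * (w y ^ 2 + u y ^ 2 + z y ^ 2)
        + y ^ 2 * s y ^ (α + 1) * (w y ^ 2 + (y * v y) ^ 2)) := by
  have hsc := hs.continuousOn
  have := hs.continuousOn_rpow hα
  have hpow₁ := hs.continuousOn_rpow (p := α + 1) (by linarith)
  rw [← intervalIntegral.integral_const_mul]
  refine intervalIntegral.integral_mono_on_of_le_Ioo hab
    (ContinuousOn.intervalIntegrable_of_Icc hab (by fun_prop))
    (ContinuousOn.intervalIntegrable_of_Icc hab (by fun_prop)) fun y hy => ?_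
  have hspos := hs.pos hκ hy
  have hsa : s y ≤ s a :=
    (hs.strictAntiOn hκ).antitoneOn (left_mem_Icc.2 hab) (Ioo_subset_Icc_self hy) hy.1.le
  have hsa₀ : 0 ≤ s a := hs.nonneg_left hκ hab
  have hy₀ : 0 < y := ha.trans hy.1
  have hpow₄ : a ^ 4 ≤ y ^ 4 := pow_le_pow_left₀ ha.le hy.1.le 4
  set Q := w y ^ 2 + u y ^ 2 + z y ^ 2
  have hsource : (z y + u y) ^ 2 + w y ^ 2 + (s y * v y) ^ 2 ≤
      2 * Q + s y * s a * v y ^ 2 := by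
    have hsq : (s y * v y) ^ 2 ≤ s y * s a * v y ^ 2 := by
      rw [mul_pow, sq (s y)]
      gcongr
    nlinarith [sq_nonneg (z y - u y), sq_nonneg (w y)]
  calc s y ^ α * ((z y + u y) ^ 2 + w y ^ 2 + (s y * v y) ^ 2)
      ≤ s y ^ α * (2 * Q + s y * s a * v y ^ 2) := by gcongr
    _ = s y ^ α * (a ^ 4 * (2 * Q + s a * (s y * v y ^ 2))) / a ^ 4 := by field_simp
    _ ≤ s y ^ α * (y ^ 4 * ((2 + s a) * Q + (2 + s a) * (s y * v y ^ 2))) / a ^ 4 := by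
        gcongr <;> linarith
    _ ≤ s y ^ α * (y ^ 4 * ((2 + s a) * Q + (2 + s a) * (s y * v y ^ 2))
          + (2 + s a) * (y ^ 2 * s y * w y ^ 2)) / a ^ 4 := by
        gcongr
        exact le_add_of_nonneg_right (by positivity)
    _ = _ := by
        rw [rpow_add_one hspos.ne']
        ring

end WeightedEnergies

theorem exists_contDiffOn_hasDerivAt_of_contDiffOn_Icc {w : ℝ → ℝ} {a b : ℝ} {n : WithTop ℕ∞}
    (hab : a < b) (hw : ContDiffOn ℝ (n + 1) w (Icc a b)) :
    ∃ v : ℝ → ℝ, ContDiffOn ℝ n v (Icc a b) ∧ ∀ y ∈ Ioo a b, HasDerivAt w (v y) y := by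
  refine ⟨derivWithin w (Icc a b), hw.derivWithin (uniqueDiffOn_Icc hab) le_rfl, fun y hy => ?_⟩
  have hdiff := hw.differentiableOn (by simp) y (Ioo_subset_Icc_self hy)
  exact hdiff.hasDerivWithinAt.hasDerivAt (Icc_mem_nhds hy.1 hy.2)

theorem exists_elliptic_estimate_of_hasDerivAt {s s' : ℝ → ℝ} {a b κ M α γ : ℝ}
    (hs : IsVacuumProfile s s' a b κ M) (hκ : 0 < κ) (hα : 0 ≤ α) (hγ : 0 < γ) (ha : 0 < a)
    (hab : a < b) :
    ∃ ε ∈ Ioo (0 : ℝ) 1, ∃ C > 0, ∀ w v v' u z : ℝ → ℝ, ContinuousOn w (Icc a b) →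
      ContinuousOn v (Icc a b) → ContinuousOn v' (Icc a b) →
      ContinuousOn u (Icc a b) → ContinuousOn z (Icc a b) →
      (∀ y ∈ Ioo a b, HasDerivAt w (v y) y) → (∀ y ∈ Ioo a b, HasDerivAt v (v' y) y) →
      (∀ y ∈ Ioo a b, |w y| + |y * v y| ≤ ε) →
      (∀ y ∈ Ioo a b, y * s y ^ α * z y + y * s y ^ α * u y
        + (1 + w y) ^ 2 * deriv (fun x => s x ^ (α + 1) * (1 + w x) ^ (-(2 * γ)) *
            (1 + w x + x * v x) ^ (-γ)) y
        - deriv (fun x => s x ^ (α + 1)) y / (1 + w y) ^ 2 = 0) →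
      ∫ y in a..b, (y ^ 2 * s y ^ α * v y ^ 2 + y ^ 4 * s y ^ (α + 2) * v' y ^ 2) ≤
        C * ∫ y in a..b, (y ^ 4 * s y ^ α * (w y ^ 2 + u y ^ 2 + z y ^ 2)
          + y ^ 2 * s y ^ (α + 1) * (w y ^ 2 + (y * v y) ^ 2)) := by
  obtain ⟨ε, hε, C, hC, henergy⟩ := exists_energy_le_of_expanded_equation hα hγ ha hab.le hκ M
  have hsa : 0 ≤ s a := hs.nonneg_left hκ hab.le
  have hb : 0 < b := ha.trans hab
  refine ⟨ε, hε, (b ^ 2 + b ^ 4) * (C * ((2 + s a) / a ^ 4)), by positivity, ?_⟩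
  intro w v v' u z hw hv hv' hu hz hwd hvd hsmall heq
  have hbound := henergy s s' w v v' (fun y => z y + u y) hs hw hv hv' (hz.add hu) hvd hsmall
    (fun y hy => by
      have hw_pos : 0 < 1 + w y := by
        linarith [neg_abs_le (w y), abs_nonneg (y * v y), hsmall y hy, hε.2]
      have hwv_pos : 0 < 1 + w y + y * v y := by
        linarith [neg_abs_le (w y), neg_abs_le (y * v y), hsmall y hy, hε.2]
      exact expanded_equation_of_momentum_equation hα (hs.pos hκ hy) hw_pos hwv_pos
        (hs.hasDerivAt y hy) (hwd y hy) (hvd y hy) (by rw [mul_add]; exact heq y hy))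
  calc _ ≤ (b ^ 2 + b ^ 4) * ∫ y in a..b, s y ^ α * (v y ^ 2 + (s y * v' y) ^ 2) :=
        integral_spatial_energy_le hs hκ ha.le hab.le hα hv hv'
    _ ≤ (b ^ 2 + b ^ 4) * (C * ((2 + s a) / a ^ 4 *
          ∫ y in a..b, (y ^ 4 * s y ^ α * (w y ^ 2 + u y ^ 2 + z y ^ 2)
            + y ^ 2 * s y ^ (α + 1) * (w y ^ 2 + (y * v y) ^ 2)))) := by
        have hsource := integral_source_le hs hκ ha hab.le hα hw hu hz hv
        gcongr
        exact hbound.trans (by gcongr)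
    _ = _ := by ring

theorem exists_elliptic_estimate {s s' : ℝ → ℝ} {a b κ M α γ : ℝ}
    (hs : IsVacuumProfile s s' a b κ M) (hκ : 0 < κ) (hα : 0 ≤ α) (hγ : 0 < γ) (ha : 0 < a)
    (hab : a < b) :
    ∃ ε ∈ Ioo (0 : ℝ) 1, ∃ C > 0, ∀ w u z : ℝ → ℝ, ContDiffOn ℝ 2 w (Icc a b) →
      ContinuousOn u (Icc a b) → ContinuousOn z (Icc a b) →
      (∀ y ∈ Ioo a b, |w y| + |y * deriv w y| ≤ ε) →
      (∀ y ∈ Ioo a b, y * s y ^ α * z y + y * s y ^ α * u y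
        + (1 + w y) ^ 2 * deriv (fun x => s x ^ (α + 1) * (1 + w x) ^ (-(2 * γ)) *
            (1 + w x + x * deriv w x) ^ (-γ)) y
        - deriv (fun x => s x ^ (α + 1)) y / (1 + w y) ^ 2 = 0) →
      ∫ y in a..b, (y ^ 2 * s y ^ α * deriv w y ^ 2
          + y ^ 4 * s y ^ (α + 2) * deriv (deriv w) y ^ 2) ≤
        C * ∫ y in a..b, (y ^ 4 * s y ^ α * (w y ^ 2 + u y ^ 2 + z y ^ 2)
          + y ^ 2 * s y ^ (α + 1) * (w y ^ 2 + (y * deriv w y) ^ 2)) := by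
  obtain ⟨ε, hε, C, hC, hestimate⟩ := exists_elliptic_estimate_of_hasDerivAt hs hκ hα hγ ha hab
  refine ⟨ε, hε, C, hC, fun w u z hw hu hz hsmall heq => ?_⟩
  obtain ⟨v, hv, hwd⟩ := exists_contDiffOn_hasDerivAt_of_contDiffOn_Icc hab
    (hw.of_le (one_add_one_eq_two (R := WithTop ℕ∞)).le)
  obtain ⟨v', hv', hvd⟩ := exists_contDiffOn_hasDerivAt_of_contDiffOn_Icc (n := 0) hab
    (by rwa [zero_add])
  have hderiv : EqOn (deriv w) v (Ioo a b) := fun y hy => (hwd y hy).deriv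
  have hderiv₂ : EqOn (deriv (deriv w)) v' (Ioo a b) := fun y hy => by
    rw [(hderiv.eventuallyEq_of_mem (Ioo_mem_nhds hy.1 hy.2)).deriv_eq, (hvd y hy).deriv]
  have hbound := hestimate w v v' u z hw.continuousOn hv.continuousOn hv'.continuousOn hu hz
    hwd hvd (fun y hy => by rw [← hderiv hy]; exact hsmall y hy) (fun y hy => by
      have hpressure : (fun x => s x ^ (α + 1) * (1 + w x) ^ (-(2 * γ)) *
            (1 + w x + x * v x) ^ (-γ)) =ᶠ[nhds y]
          fun x => s x ^ (α + 1) * (1 + w x) ^ (-(2 * γ)) * (1 + w x + x * deriv w x) ^ (-γ) := by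
        filter_upwards [Ioo_mem_nhds hy.1 hy.2] with x hx
        rw [hderiv hx]
      rw [hpressure.deriv_eq]
      exact heq y hy)
  convert hbound using 1
  · refine intervalIntegral.integral_congr_Ioo_of_le hab.le fun y hy => ?_
    simp only [hderiv hy, hderiv₂ hy]
  · congr 1
    refine intervalIntegral.integral_congr_Ioo_of_le hab.le fun y hy => ?_
    simp only [hderiv hy]

theorem stmt_17_general (γ A g₀ r₀ R : ℝ) (hγ : 1 < γ) (hA : 0 < A) (hg₀ : 0 < g₀)
    (hr₀ : 0 < r₀) (hrR : r₀ < R) :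
    let α : ℝ := 1 / (γ - 1);
    let Abar : ℝ := ((γ - 1) * g₀ / (γ * A)) ^ (1 / (γ - 1));
    let ρbar : ℝ → ℝ := fun y => Abar * (1 / y - 1 / R) ^ (1 / (γ - 1));
    let σ : ℝ → ℝ := fun y => Abar ^ (γ - 1) * (1 / y - 1 / R);
    ∃ ε₀ ∈ Ioo (0 : ℝ) 1, ∃ C : ℝ, 0 < C ∧
      ∀ w u z : ℝ → ℝ,
        ContDiffOn ℝ 2 w (Icc r₀ R) →
        ContinuousOn u (Icc r₀ R) →
        ContinuousOn z (Icc r₀ R) →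
        (∀ y ∈ Ioo r₀ R, |w y| + |y * deriv w y| ≤ ε₀) →
        (∀ y ∈ Ioo r₀ R,
          y * ρbar y * z y + y * ρbar y * u y
            + (1 + w y) ^ 2 *
                deriv (fun a => ρbar a ^ γ * (1 + w a) ^ (-(2 * γ)) *
                  (1 + w a + a * deriv w a) ^ (-γ)) y
            - deriv (fun a => ρbar a ^ γ) y / (1 + w y) ^ 2 = 0) →
        (∫ y in r₀..R,
            (y ^ 2 * σ y ^ α * (deriv w y) ^ 2
              + y ^ 4 * σ y ^ (α + 2) * (deriv (deriv w) y) ^ 2)) ≤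
          C * ∫ y in r₀..R,
            (y ^ 4 * σ y ^ α * (w y ^ 2 + u y ^ 2 + z y ^ 2)
              + y ^ 2 * σ y ^ (α + 1) * (w y ^ 2 + (y * deriv w y) ^ 2)) := by
  intro α Abar ρbar σ
  have hγ₁ : 0 < γ - 1 := sub_pos.2 hγ
  have hγ₀ : 0 < γ := by linarith
  have hα : 0 < α := by positivity
  have hK : 0 < Abar ^ (γ - 1) := by positivity
  have hR : 0 < R := hr₀.trans hrR
  have hprofile : IsVacuumProfile σ _ r₀ R _ _ := isVacuumProfile_enthalpy hK.le hr₀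
  obtain ⟨ε, hε, C, hC, hestimate⟩ := exists_elliptic_estimate hprofile
    (by positivity) hα.le hγ₀ hr₀ hrR
  refine ⟨ε, hε, C, hC, fun w u z hw hu hz hsmall heq => hestimate w u z hw hu hz hsmall ?_⟩
  have hρ : EqOn ρbar (fun y => σ y ^ α) (Ioo r₀ R) := fun y hy =>
    mul_rpow_eq_enthalpy_rpow (by positivity) hγ (hr₀.trans hy.1) hy.2.le
  have hρ_pow : EqOn (fun y => σ y ^ (α + 1)) (fun y => ρbar y ^ γ) (Ioo r₀ R) := fun y hy => by
    have hαγ : α + 1 = α * γ := by simp only [α]; field_simp; ring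
    simp only [hρ hy]
    rw [hαγ, rpow_mul (hprofile.pos (by positivity) hy).le]
  intro y hy
  have hnhds : Ioo r₀ R ∈ nhds y := Ioo_mem_nhds hy.1 hy.2
  have hpressure : (fun x => σ x ^ (α + 1) * (1 + w x) ^ (-(2 * γ)) *
        (1 + w x + x * deriv w x) ^ (-γ)) =ᶠ[nhds y]
      fun x => ρbar x ^ γ * (1 + w x) ^ (-(2 * γ)) * (1 + w x + x * deriv w x) ^ (-γ) := by
    filter_upwards [hnhds] with x hx
    exact congrArg (· * _ * _) (hρ_pow hx)
  have hρy : ρbar y = σ y ^ α := hρ hy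
  rw [hpressure.deriv_eq, (hρ_pow.eventuallyEq_of_mem hnhds).deriv_eq, ← hρy]
  exact heq y hy

/-- Lower-order elliptic estimate (Lemma 3.1, single-time form): for γ > 4/3 and
r₀ < R ≤ (4/(3−α))r₀ with α = 1/(γ−1), the weighted spatial energy of (w′, w″) is
controlled by the weighted norms of (w, u, z) for any small solution of the stationary
relation y ρ̄ z + y ρ̄ u + (1+w)²[ρ̄^γ(1+w)^{−2γ}(1+w+yw′)^{−γ}]′ − (ρ̄^γ)′/(1+w)² = 0. -/
theorem stmt_17 (γ A g₀ r₀ R : ℝ) (hγ : 4 / 3 < γ) (hA : 0 < A) (hg₀ : 0 < g₀)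
    (hr₀ : 0 < r₀) (hrR : r₀ < R) (hRr : R ≤ 4 / (3 - 1 / (γ - 1)) * r₀) :
    let α : ℝ := 1 / (γ - 1);
    let Abar : ℝ := ((γ - 1) * g₀ / (γ * A)) ^ (1 / (γ - 1));
    let ρbar : ℝ → ℝ := fun y => Abar * (1 / y - 1 / R) ^ (1 / (γ - 1));
    let σ : ℝ → ℝ := fun y => Abar ^ (γ - 1) * (1 / y - 1 / R);
    ∃ ε₀ ∈ Ioo (0 : ℝ) 1, ∃ C : ℝ, 0 < C ∧
      ∀ w u z : ℝ → ℝ,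
        ContDiffOn ℝ 2 w (Icc r₀ R) →
        ContinuousOn u (Icc r₀ R) →
        ContinuousOn z (Icc r₀ R) →
        w r₀ = 0 →
        (∀ y ∈ Icc r₀ R, 0 < 1 + w y ∧ 0 < 1 + w y + y * deriv w y) →
        (∀ y ∈ Icc r₀ R, |w y| + |y * deriv w y| ≤ ε₀) →
        (∀ y ∈ Ioo r₀ R,
          y * ρbar y * z y + y * ρbar y * u y
            + (1 + w y) ^ 2 *
                deriv (fun a => ρbar a ^ γ * (1 + w a) ^ (-(2 * γ)) *
                  (1 + w a + a * deriv w a) ^ (-γ)) y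
            - deriv (fun a => ρbar a ^ γ) y / (1 + w y) ^ 2 = 0) →
        (∫ y in r₀..R,
            (y ^ 2 * σ y ^ α * (deriv w y) ^ 2
              + y ^ 4 * σ y ^ (α + 2) * (deriv (deriv w) y) ^ 2)) ≤
          C * ∫ y in r₀..R,
            (y ^ 4 * σ y ^ α * (w y ^ 2 + u y ^ 2 + z y ^ 2)
              + y ^ 2 * σ y ^ (α + 1) * (w y ^ 2 + (y * deriv w y) ^ 2)) := by
  obtain ⟨ε₀, hε₀, C, hC, h⟩ := stmt_17_general γ A g₀ r₀ R (by linarith) hA hg₀ hr₀ hrR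
  exact ⟨ε₀, hε₀, C, hC, fun w u z hw hu hz _ _ hsmall =>
    h w u z hw hu hz fun y hy => hsmall y (Ioo_subset_Icc_self hy)⟩
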